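/- Let R be a commutative ring, λ, δ ∈ R^× with λ = δ^n. A subset C of R^n is a cyclic code (a submodule closed under the cyclic shift) if and only if μ(C) is a λ-constacyclic code (a submodule closed under the λ-constacyclic shift), where μ is the map (c₀,…,c_{n-1}) ↦ (c₀, δ⁻¹c₁, δ⁻²c₂, …, δ^{-(n-1)}c_{n-1}). -/

import Mathlib

/-!
The diagonal map `μ = diag(1, δ⁻¹, …, δ⁻⁽ⁿ⁻¹⁾)` intertwines the `a`-constacyclic shift followed by
the scalar `δ` with the `aδⁿ`-constacyclic shift: consecutive weights of `μ` differ by the factor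
`δ`, and the factor `δⁿ` makes up for the jump at the wrap-around. A code is stable under
multiplication by the unit `δ`, so that scalar does not affect invariance under the shift.
-/

section ConstacyclicShift

variable {R α : Type*} [Monoid R] [MulAction R α] {n : ℕ}

/-- The `a`-constacyclic shift `(c₀, …, cₙ₋₁) ↦ (a • cₙ₋₁, c₀, …, cₙ₋₂)` on words indexed by
`ZMod n`, where the index `i - 1` wraps around at `i = 0`. The cyclic shift is the case `a = 1`. -/
def constacyclicShift (a : R) (c : ZMod n → α) : ZMod n → α :=
  fun i => (if i = 0 then a else 1) • c (i - 1)

/-- The map `μ : (c₀, …, cₙ₋₁) ↦ (c₀, δ⁻¹ • c₁, …, δ⁻⁽ⁿ⁻¹⁾ • cₙ₋₁)`, as a permutation of the set of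
words. -/
def geometricScaling (δ : Rˣ) : Equiv.Perm (ZMod n → α) :=
  Equiv.piCongrRight fun i => MulAction.toPerm (δ⁻¹ ^ i.val)

theorem constacyclicShift_one :
    constacyclicShift (1 : R) = fun (c : ZMod n → α) i => c (i - 1) := by
  funext c i
  rw [constacyclicShift, ite_self, one_smul]

theorem coe_geometricScaling (δ : Rˣ) :
    ⇑(geometricScaling δ) = fun (c : ZMod n → α) i => ((δ⁻¹ : Rˣ) : R) ^ i.val • c i := by
  funext c i
  rw [← Units.val_pow_eq_pow_val]
  rfl

theorem val_sub_one_add_one [NeZero n] (i : ZMod n) :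
    (i - 1).val + 1 = if i = 0 then n else i.val := by
  obtain ⟨m, rfl⟩ := Nat.exists_eq_succ_of_ne_zero (NeZero.ne n)
  split_ifs with hi
  · rw [hi, zero_sub, ZMod.val_neg_one]
  · have hpos : 0 < i.val := ZMod.val_pos.mpr hi
    have : Fact (1 < m + 1) := ⟨lt_of_le_of_lt hpos i.val_lt⟩
    have hone : (1 : ZMod (m + 1)).val = 1 := ZMod.val_one _
    rw [ZMod.val_sub (hone.trans_le hpos), hone, Nat.sub_add_cancel hpos]

theorem constacyclic_weight_mul [NeZero n] {δ : Rˣ} {a : R} (ha : Commute a δ) (i : ZMod n) :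
    (if i = 0 then a * (δ : R) ^ n else 1) * ((δ⁻¹ : Rˣ) : R) ^ (i - 1).val =
      ((δ⁻¹ : Rˣ) : R) ^ i.val * (δ * if i = 0 then a else 1) := by
  have hval := val_sub_one_add_one i
  split_ifs at hval ⊢ with hi
  · calc
      a * (δ : R) ^ n * ((δ⁻¹ : Rˣ) : R) ^ (i - 1).val
      _ = a * ((δ ^ n * δ⁻¹ ^ (i - 1).val : Rˣ) : R) := by
        rw [Units.val_mul, Units.val_pow_eq_pow_val, Units.val_pow_eq_pow_val, mul_assoc]
      _ = a * δ := by
        rw [show δ ^ n = δ * δ ^ (i - 1).val by rw [← pow_succ', hval], inv_pow,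
          mul_inv_cancel_right]
      _ = ((δ⁻¹ : Rˣ) : R) ^ i.val * (δ * a) := by
        rw [hi, ZMod.val_zero, pow_zero, one_mul, ha.eq]
  · rw [one_mul, mul_one, ← hval, pow_succ, Units.inv_mul_cancel_right]

theorem semiconj_geometricScaling_constacyclicShift [NeZero n] {δ : Rˣ} {a : R}
    (ha : Commute a δ) :
    Function.Semiconj (geometricScaling δ) (fun c : ZMod n → α => δ • constacyclicShift a c)
      (constacyclicShift (a * (δ : R) ^ n)) := by
  intro c
  funext i
  simp only [coe_geometricScaling, constacyclicShift, Pi.smul_apply, Units.smul_def, smul_smul,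
    constacyclic_weight_mul ha]

theorem stmt_10_general [NeZero n] {δ : Rˣ} {a : R} (ha : Commute a δ) {C : Set (ZMod n → α)}
    (hC : ∀ c, δ • c ∈ C ↔ c ∈ C) :
    Set.MapsTo (constacyclicShift a) C C ↔
      Set.MapsTo (constacyclicShift (a * (δ : R) ^ n))
        (geometricScaling δ '' C) (geometricScaling δ '' C) := by
  rw [Set.mapsTo_image_iff, ← (semiconj_geometricScaling_constacyclicShift ha).comp_eq]
  refine forall₂_congr fun c _ => ?_
  rw [Function.comp_apply, (geometricScaling δ).injective.mem_set_image, hC]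

end ConstacyclicShift

theorem stmt_10 (R : Type*) [CommRing R] (n : ℕ) (hn : 0 < n)
    (δ : Rˣ) (lam : R) (hlam : lam = (δ : R) ^ n)
    (C : Submodule R (ZMod n → R)) :
    -- μ sends c to (i ↦ δ^{-i} c_i); μ(C) is the image of C under μ
    (∀ c ∈ C, (fun i : ZMod n => c (i - 1)) ∈ C) ↔
      (∀ d ∈ (fun c : ZMod n → R => fun i : ZMod n => ((δ⁻¹ : Rˣ) : R) ^ i.val * c i) '' (C : Set (ZMod n → R)),
        (fun i : ZMod n => (if i = 0 then lam else 1) * d (i - 1)) ∈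
          (fun c : ZMod n → R => fun i : ZMod n => ((δ⁻¹ : Rˣ) : R) ^ i.val * c i) '' (C : Set (ZMod n → R))) := by
  have : NeZero n := .of_pos hn
  simpa only [constacyclicShift_one, coe_geometricScaling, one_mul, ← hlam] using!
    stmt_10_general (Commute.one_left (δ : R)) fun c => C.smul_mem_iff' δ (x := c)
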